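/- Let r be odd. The map ρ sending π ∈ G(r,n) to the linear endomorphism of V_{r,n} defined by ρ(π)C_w := sign_o(π,w) · C_{π w πᵗ} (for w ∈ I_{r,n}) is a group homomorphism into GL(V_{r,n}), and for every π ∈ G(r,n) the trace of ρ(π) equals ∑_{χ ∈ Irr(G(r,n))} χ(π); i.e. ρ is a Gelfand model for G(r,n), equivalent to the multiplicity-free direct sum of all irreducible complex representations of G(r,n). -/

import Mathlib

/-!
Let `v ↦ v̄` be an involutive automorphism of a finite group such that `g⁻¹` is always conjugate to
`ḡ`. Then for every irreducible `V` the invariants of `V ⊗ V̄` form a line, on which the swap of the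
two factors acts by a sign, and computing this sign as a trace gives `|G|⁻¹ ∑ v, χ_V (v v̄) = ± 1`.
Hence a representation whose character is `g ↦ #{v | v v̄ = g}` contains every irreducible with
multiplicity `± 1`, that is, exactly once.

It remains to see that the trace at `π = (σ, z)` of the signed action on absolute involutions, a
signed count of fixed points, equals the number of `v` with `v v̄ = π`. Fibring both sides over the
underlying permutations leaves involutions `u` commuting with `σ` on one side and square roots `τ`
of `σ` on the other. As `2` is invertible modulo the odd number `r`, the number of colourings over
`u` or `τ` depends only on the permutation it induces on the cycles of `σ`, so it is enough to
compare the signs of the involutions with the square roots inducing a given permutation of cycles.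
If the latter fixes an even cycle of `σ`, there is no square root, and the involutions cancel in
pairs under multiplication by the half turn of that cycle. Otherwise every sign is `1`, and a shift
along the cycles turns involutions into square roots.
-/

open Finset CategoryTheory

/-- The wreath product `ℤ_r ≀ S_n`: elements are pairs `(σ, z)` with
`σ` a permutation of `{1,…,n}` and `z ∈ (ℤ/rℤ)^n`.  The multiplication is
`(σ,c)·(τ,d) = (στ, (c_{τ⁻¹(i)} + d_i)_i)`, where in the paper's convention
permutations compose left-to-right; translated to Lean's convention
(`(σ * τ) x = σ (τ x)`) this reads `(σ,c)·(τ,d) = (σ * τ, fun i => c (τ i) + d i)`,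
i.e. the semidirect product of `Fin n → ZMod r` by `Equiv.Perm (Fin n)`
acting by permuting coordinates. -/
def Wreath (r n : ℕ) : Type := Equiv.Perm (Fin n) × (Fin n → ZMod r)

namespace Wreath

variable {r n : ℕ}

instance : Group (Wreath r n) where
  mul v w := ⟨v.1 * w.1, fun i => v.2 (w.1 i) + w.2 i⟩
  one := ⟨1, 0⟩
  inv v := ⟨v.1⁻¹, fun i => -v.2 (v.1⁻¹ i)⟩
  mul_assoc a b c := Prod.ext (mul_assoc _ _ _) (funext fun i => add_assoc _ _ _)
  one_mul a := by
    refine Prod.ext (one_mul _) (funext fun i => ?_)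
    show (0 : Fin n → ZMod r) (a.1 i) + a.2 i = a.2 i
    simp
  mul_one a := by
    refine Prod.ext (mul_one _) (funext fun i => ?_)
    show a.2 ((1 : Equiv.Perm (Fin n)) i) + (0 : Fin n → ZMod r) i = a.2 i
    simp
  inv_mul_cancel a := by
    refine Prod.ext (inv_mul_cancel _) (funext fun i => ?_)
    show -a.2 (a.1⁻¹ (a.1 i)) + a.2 i = (0 : Fin n → ZMod r) i
    simp

instance [NeZero r] : Fintype (Wreath r n) :=
  inferInstanceAs (Fintype (Equiv.Perm (Fin n) × (Fin n → ZMod r)))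

instance : DecidableEq (Wreath r n) :=
  inferInstanceAs (DecidableEq (Equiv.Perm (Fin n) × (Fin n → ZMod r)))

theorem mul_def (v w : Wreath r n) :
    v * w = ⟨v.1 * w.1, fun i => v.2 (w.1 i) + w.2 i⟩ := rfl

theorem one_def : (1 : Wreath r n) = ⟨1, 0⟩ := rfl

theorem inv_def (v : Wreath r n) : v⁻¹ = ⟨v.1⁻¹, fun i => -v.2 (v.1⁻¹ i)⟩ := rfl

/-- The bar operation `(σ, z) ↦ (σ, −z)`. -/
def bar (v : Wreath r n) : Wreath r n := ⟨v.1, -v.2⟩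

theorem bar_mul (v w : Wreath r n) : bar (v * w) = bar v * bar w := by
  refine Prod.ext rfl (funext fun i => ?_)
  show -(v.2 (w.1 i) + w.2 i) = -v.2 (w.1 i) + -w.2 i
  ring

theorem bar_bar (v : Wreath r n) : bar (bar v) = v := by
  refine Prod.ext rfl ?_
  show - - v.2 = v.2
  simp

/-- `bar` as a group automorphism. -/
def barAut : Wreath r n ≃* Wreath r n where
  toFun := bar
  invFun := bar
  left_inv := bar_bar
  right_inv := bar_bar
  map_mul' := bar_mul

theorem bar_inv (v : Wreath r n) : bar v⁻¹ = (bar v)⁻¹ :=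
  map_inv (barAut : Wreath r n ≃* Wreath r n) v

/-- `vᵗ := (v̄)⁻¹`. -/
def tr (v : Wreath r n) : Wreath r n := (bar v)⁻¹

/-- Conjugation `w ↦ π w πᵗ` maps absolute involutions to absolute involutions. -/
theorem conj_absInv {w : Wreath r n} (hw : w * bar w = 1) (π : Wreath r n) :
    (π * w * tr π) * bar (π * w * tr π) = 1 := by
  have h1 : bar (π * w * tr π) = bar π * bar w * π⁻¹ := by
    rw [bar_mul, bar_mul, tr, bar_inv, bar_bar]
  calc (π * w * tr π) * bar (π * w * tr π)
      = π * (w * bar w) * π⁻¹ := by rw [h1, tr]; group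
    _ = 1 := by rw [hw]; group

end Wreath

/-- The set of inversions of `σ`, encoded as ordered pairs `(i,j)` with `i < j`
and `σ j < σ i` (one representative for each unordered pair `{i,j}` with
`(j−i)(σ(j)−σ(i)) < 0`). -/
def invPairs {n : ℕ} (σ : Equiv.Perm (Fin n)) : Finset (Fin n × Fin n) :=
  Finset.univ.filter fun p => p.1 < p.2 ∧ σ p.2 < σ p.1

/-- The 2-cycles of an involution `u`, encoded as ordered pairs `(i,j)` with `i < j`,
`u i = j` and `u j = i` (one representative for each unordered pair `{i,j}`). -/
def pairSet {n : ℕ} (u : Equiv.Perm (Fin n)) : Finset (Fin n × Fin n) :=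
  Finset.univ.filter fun p => p.1 < p.2 ∧ u p.1 = p.2 ∧ u p.2 = p.1

/-- `sign_o(π,w) := (−1)^{#(Inv(|π|) ∩ Pair(|w|))}`. -/
def signO {r n : ℕ} (π w : Wreath r n) : ℤ :=
  (-1) ^ ((invPairs π.1 ∩ pairSet w.1).card)

/-- A family of finite-dimensional complex representations forming a complete set of
pairwise non-isomorphic irreducible representations of `G`. -/
def IsCompleteIrrFamily {G : Type} [Monoid G] {ι : Type} (V : ι → FDRep ℂ G) : Prop :=
  (∀ i, Simple (V i)) ∧ (∀ i j, Nonempty (V i ≅ V j) → i = j) ∧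
    ∀ W : FDRep ℂ G, Simple W → ∃ i, Nonempty (V i ≅ W)

/-- `I_{r,n}`: the set of absolute involutions in `G(r,n)`, i.e. elements `w` with
`w · w̄ = id`. -/
def AbsInv (r n : ℕ) : Type := {w : Wreath r n // w * Wreath.bar w = 1}

instance (r n : ℕ) : DecidableEq (AbsInv r n) :=
  inferInstanceAs (DecidableEq {w : Wreath r n // w * Wreath.bar w = 1})

instance (r n : ℕ) [NeZero r] : Fintype (AbsInv r n) :=
  inferInstanceAs (Fintype {w : Wreath r n // w * Wreath.bar w = 1})

/-- The conjugation action `w ↦ π w πᵗ` on absolute involutions. -/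
def conjAbs {r n : ℕ} (π : Wreath r n) (w : AbsInv r n) : AbsInv r n :=
  ⟨π * w.1 * Wreath.tr π, Wreath.conj_absInv w.2 π⟩

section LinearAlgebra

open TensorProduct

variable {k U : Type*} [Field k] [AddCommGroup U] [Module k U]

theorem trace_comm_comp_map [FiniteDimensional k U] (A B : U →ₗ[k] U) :
    LinearMap.trace k (U ⊗[k] U) ((TensorProduct.comm k U U).toLinearMap ∘ₗ TensorProduct.map A B)
      = LinearMap.trace k U (A ∘ₗ B) := by
  classical
  let b := Module.finBasis k U
  rw [LinearMap.trace_eq_matrix_trace k (b.tensorProduct b), LinearMap.trace_eq_matrix_trace k b,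
    LinearMap.toMatrix_comp b b b, Matrix.trace, Matrix.trace, Fintype.sum_prod_type]
  simpa [LinearMap.toMatrix_apply, Matrix.mul_apply] using Finset.sum_comm

theorem trace_eq_trace_restrict_add_of_isCompl [FiniteDimensional k U] {f : U →ₗ[k] U}
    {p q : Submodule k U} (h : IsCompl p q) (hp : ∀ x ∈ p, f x ∈ p) (hq : ∀ x ∈ q, f x ∈ q) :
    LinearMap.trace k U f =
      LinearMap.trace k p (f.restrict hp) + LinearMap.trace k q (f.restrict hq) := by
  let e := Submodule.prodEquivOfIsCompl p q h
  rw [← LinearMap.trace_prodMap', ← LinearMap.trace_conj' _ e]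
  congr 1
  ext x
  obtain ⟨⟨a, b⟩, rfl⟩ := e.surjective x
  simp [LinearEquiv.conj_apply, e]

theorem trace_comp_sq_eq_one_of_isProj [FiniteDimensional k U] {s P : U →ₗ[k] U}
    {L : Submodule k U} (hP : LinearMap.IsProj L P) (hL : Module.finrank k L = 1)
    (hs : ∀ x, s (s x) = x) (hsL : ∀ x ∈ L, s x ∈ L) : LinearMap.trace k U (s ∘ₗ P) ^ 2 = 1 := by
  obtain ⟨⟨x, hx⟩, hx0, hspan⟩ := finrank_eq_one_iff'.mp hL
  obtain ⟨c, hc⟩ : ∃ c : k, c • x = s x :=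
    (hspan ⟨s x, hsL x hx⟩).imp fun _ h => congrArg Subtype.val h
  have hsP : s ∘ₗ P = c • P := by
    ext y
    obtain ⟨a, ha⟩ : ∃ a : k, a • x = P y :=
      (hspan ⟨P y, hP.map_mem y⟩).imp fun _ h => congrArg Subtype.val h
    rw [LinearMap.comp_apply, LinearMap.smul_apply, ← ha, map_smul, ← hc, smul_comm]
  have hcc : (c ^ 2) • x = (1 : k) • x := by
    rw [sq, mul_smul, hc, ← map_smul, hc, hs, one_smul]
  rw [hsP, map_smul, hP.trace, hL, Nat.cast_one, smul_eq_mul, mul_one]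
  exact smul_left_injective k (fun h => hx0 (Subtype.ext h)) hcc

end LinearAlgebra

section FrobeniusSchur

open TensorProduct

universe u v

variable {k : Type u} {G : Type v} {U : Type*} [Field k] [Group G] [AddCommGroup U] [Module k U]

/-- The Frobenius–Schur indicator of a class function `χ`, twisted by an endomorphism `ε` of `G`:
the mean of `χ (g * ε g)`. Twisting by `ε = id` gives the classical indicator. -/
noncomputable def twistedIndicator [Fintype G] (ε : G → G) (χ : G → k) : k :=
  (Nat.card G : k)⁻¹ * ∑ g, χ (g * ε g)

theorem comm_mem_invariants_tprod_comp {ε : G →* G} (hε : Function.Involutive ε)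
    (ρ : Representation k G U) {x : U ⊗[k] U} (hx : x ∈ (ρ.tprod (ρ.comp ε)).invariants) :
    TensorProduct.comm k U U x ∈ (ρ.tprod (ρ.comp ε)).invariants := by
  intro g
  have hcomm : ∀ y, ρ.tprod (ρ.comp ε) g (TensorProduct.comm k U U y) =
      TensorProduct.comm k U U (ρ.tprod (ρ.comp ε) (ε g) y) := fun y => by
    induction y using TensorProduct.induction_on with
    | zero => simp
    | add y z hy hz => simp only [map_add, hy, hz]
    | tmul y z => simp [hε g]
  rw [hcomm, hx]

theorem trace_comm_comp_averageMap [Fintype G] [FiniteDimensional k U]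
    [Invertible (Fintype.card G : k)] (ε : G →* G) (ρ : Representation k G U) :
    LinearMap.trace k (U ⊗[k] U)
        ((TensorProduct.comm k U U).toLinearMap ∘ₗ (ρ.tprod (ρ.comp ε)).averageMap) =
      twistedIndicator ε ρ.character := by
  have havg : (ρ.tprod (ρ.comp ε)).averageMap =
      (Nat.card G : k)⁻¹ • ∑ g, TensorProduct.map (ρ g) (ρ (ε g)) := by
    simp [Representation.averageMap, GroupAlgebra.average, map_sum, Representation.tprod]
  have hcomp : (TensorProduct.comm k U U).toLinearMap ∘ₗ (ρ.tprod (ρ.comp ε)).averageMap =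
      (Nat.card G : k)⁻¹ •
        ∑ g, (TensorProduct.comm k U U).toLinearMap ∘ₗ TensorProduct.map (ρ g) (ρ (ε g)) := by
    rw [havg, LinearMap.comp_smul, ← LinearMap.compRight_apply k, map_sum]
    rfl
  rw [hcomp, map_smul, map_sum, smul_eq_mul, twistedIndicator]
  simp only [trace_comm_comp_map, Representation.character, map_mul, Module.End.mul_eq_comp]

variable [IsAlgClosed k] [CharZero k]

theorem finrank_invariants_tprod_comp_eq_one [Finite G] {ε : G →* G} (V : FDRep k G) [Simple V]
    (hV : ∀ g, V.character (ε g) = V.character g⁻¹) :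
    Module.finrank k (Representation.tprod V.ρ (V.ρ.comp ε)).invariants = 1 := by
  classical
  have := Fintype.ofFinite G
  have : Invertible (Nat.card G : k) := invertibleOfNonzero (by simp)
  have hchar (g : G) : (Representation.tprod V.ρ (V.ρ.comp ε)).character g =
      V.character g * V.character g⁻¹ := by
    rw [Representation.char_tensor, ← hV]
    rfl
  have hone := Representation.card_inv_mul_sum_char_eq_finrank
    (Representation.tprod V.ρ (V.ρ.comp ε))
  simp_rw [hchar] at hone
  rw [FDRep.char_orthonormal, if_pos ⟨Iso.refl V⟩] at hone
  exact_mod_cast hone.symm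

theorem twistedIndicator_sq_eq_one [Fintype G] {ε : G →* G} (hε : Function.Involutive ε)
    (V : FDRep k G) [Simple V] (hV : ∀ g, V.character (ε g) = V.character g⁻¹) :
    twistedIndicator ε V.character ^ 2 = 1 := by
  have : Invertible (Fintype.card G : k) := invertibleOfNonzero (by simp)
  have htrace := trace_comm_comp_averageMap ε V.ρ
  change _ = twistedIndicator ε V.character at htrace
  rw [← htrace]
  exact trace_comp_sq_eq_one_of_isProj (Representation.isProj_averageMap _)
    (finrank_invariants_tprod_comp_eq_one V hV) (fun _ => TensorProduct.comm_comm _ _ _ _)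
    fun _ => comm_mem_invariants_tprod_comp hε V.ρ

end FrobeniusSchur

section CharacterDecomposition

universe u

theorem simple_of_isIrreducible {k G U : Type u} [Field k] [IsAlgClosed k] [CharZero k] [Group G]
    [Finite G] [AddCommGroup U] [Module k U] [FiniteDimensional k U] (ρ : Representation k G U)
    [ρ.IsIrreducible] : Simple (FDRep.of ρ) := by
  classical
  have := Fintype.ofFinite G
  have : Invertible (Nat.card G : k) := invertibleOfNonzero (by simp)
  have hone := Representation.char_orthonormal ρ ρ
  rw [if_pos ⟨Representation.Equiv.refl _⟩, inv_mul_eq_iff_eq_mul₀ (by simp), mul_one] at hone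
  exact (FDRep.simple_iff_char_is_norm_one _).2 hone

theorem isCompl_toSubmodule {k G U : Type*} [CommSemiring k] [Monoid G] [AddCommMonoid U]
    [Module k U] {ρ : Representation k G U} {p q : Subrepresentation ρ} (h : IsCompl p q) :
    IsCompl p.toSubmodule q.toSubmodule := by
  constructor
  · rw [disjoint_iff, ← Subrepresentation.toSubmodule_inf, h.inf_eq_bot]
    rfl
  · rw [codisjoint_iff, ← Subrepresentation.toSubmodule_sup, h.sup_eq_top]
    rfl

theorem exists_isCompl_of_not_isIrreducible {k G U : Type*} [Field k] [Group G] [Finite G]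
    [NeZero (Nat.card G : k)] [AddCommGroup U] [Module k U] [Nontrivial U]
    {ρ : Representation k G U} (hρ : ¬ ρ.IsIrreducible) :
    ∃ p q : Subrepresentation ρ, IsCompl p.toSubmodule q.toSubmodule ∧
      p.toSubmodule ≠ ⊤ ∧ q.toSubmodule ≠ ⊤ := by
  have : Nontrivial (Subrepresentation ρ) :=
    ⟨⊥, ⊤, fun h => bot_ne_top (α := Submodule k U) (congrArg Subrepresentation.toSubmodule h)⟩
  obtain ⟨p, hbot, htop⟩ : ∃ p : Subrepresentation ρ, p ≠ ⊥ ∧ p ≠ ⊤ := by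
    by_contra! h
    exact hρ ⟨fun p => or_iff_not_imp_left.2 (h p)⟩
  have : Representation.IsSemisimpleRepresentation ρ := inferInstance
  obtain ⟨q, hpq⟩ := exists_isCompl p
  have htop' : q ≠ ⊤ := fun h => hbot (by simpa [h] using hpq.inf_eq_bot)
  exact ⟨p, q, isCompl_toSubmodule hpq, fun h => htop (Subrepresentation.toSubmodule_injective h),
    fun h => htop' (Subrepresentation.toSubmodule_injective h)⟩

variable {G ι : Type} [Group G] [Fintype ι] {V : ι → FDRep ℂ G}

theorem exists_character_eq_sum_mul [Finite G] (hV : IsCompleteIrrFamily V) {U : Type}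
    [AddCommGroup U] [Module ℂ U] [FiniteDimensional ℂ U] (ρ : Representation ℂ G U) :
    ∃ m : ι → ℕ, ∀ g, ρ.character g = ∑ i, (m i : ℂ) * (V i).character g := by
  classical
  induction hd : Module.finrank ℂ U using Nat.strong_induction_on generalizing U with
  | _ d ih =>
  subst hd
  rcases subsingleton_or_nontrivial U with _ | _
  · exact ⟨0, fun g => by simp [Representation.character, Subsingleton.elim (ρ g) 0]⟩
  by_cases hirr : ρ.IsIrreducible
  · obtain ⟨i, ⟨e⟩⟩ := hV.2.2 (FDRep.of ρ) (simple_of_isIrreducible ρ)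
    refine ⟨Pi.single i 1, fun g => ?_⟩
    simp only [Pi.single_apply, Nat.cast_ite, Nat.cast_one, Nat.cast_zero, ite_mul, one_mul,
      zero_mul, sum_ite_eq', mem_univ, if_true, FDRep.char_iso e]
    rfl
  · have : NeZero (Nat.card G : ℂ) := ⟨Nat.cast_ne_zero.2 Nat.card_pos.ne'⟩
    obtain ⟨p, q, hpq, hp, hq⟩ := exists_isCompl_of_not_isIrreducible hirr
    obtain ⟨m₁, h₁⟩ := ih _ (Submodule.finrank_lt hp) p.toRepresentation rfl
    obtain ⟨m₂, h₂⟩ := ih _ (Submodule.finrank_lt hq) q.toRepresentation rfl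
    refine ⟨m₁ + m₂, fun g => ?_⟩
    have htrace : ρ.character g = p.toRepresentation.character g + q.toRepresentation.character g :=
      trace_eq_trace_restrict_add_of_isCompl hpq (p.apply_mem_toSubmodule g)
        (q.apply_mem_toSubmodule g)
    simp [htrace, h₁, h₂, add_mul, sum_add_distrib]

theorem inv_card_mul_sum_character_mul_eq [Fintype G] (hV : IsCompleteIrrFamily V)
    (a : ι → ℂ) (j : ι) :
    (Nat.card G : ℂ)⁻¹ * ∑ g, (∑ i, a i * (V i).character g) * (V j).character g⁻¹ = a j := by
  classical
  have := hV.1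
  have : Invertible (Nat.card G : ℂ) := invertibleOfNonzero (by simp)
  have horth (i : ι) : (Nat.card G : ℂ)⁻¹ * ∑ g, (V i).character g * (V j).character g⁻¹ =
      if i = j then 1 else 0 := by
    rw [FDRep.char_orthonormal]
    exact if_congr ⟨hV.2.1 i j, fun h => h ▸ ⟨Iso.refl _⟩⟩ rfl rfl
  calc (Nat.card G : ℂ)⁻¹ * ∑ g, (∑ i, a i * (V i).character g) * (V j).character g⁻¹
      = ∑ i, a i * ((Nat.card G : ℂ)⁻¹ * ∑ g, (V i).character g * (V j).character g⁻¹) := by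
        simp_rw [sum_mul, mul_sum]
        rw [sum_comm]
        exact sum_congr rfl fun i _ => sum_congr rfl fun g _ => by ring
    _ = a j := by simp_rw [horth]; simp

theorem character_eq_sum_of_character_eq_card_twisted_sqrt [Fintype G] [DecidableEq G]
    (hV : IsCompleteIrrFamily V) {ε : G →* G} (hε : Function.Involutive ε)
    (hconj : ∀ g, IsConj g⁻¹ (ε g)) {U : Type} [AddCommGroup U] [Module ℂ U]
    [FiniteDimensional ℂ U] {ρ : Representation ℂ G U}
    (hρ : ∀ g, ρ.character g = #{v | v * ε v = g}) (g : G) :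
    ρ.character g = ∑ i, (V i).character g := by
  obtain ⟨m, hm⟩ := exists_character_eq_sum_mul hV ρ
  have hchar (j : ι) (g : G) : (V j).character (ε g) = (V j).character g⁻¹ := by
    obtain ⟨h, hh⟩ := isConj_iff.1 (hconj g)
    rw [← hh, FDRep.char_conj]
  have hind (j : ι) : (m j : ℂ) = twistedIndicator ε (V j).character := by
    rw [← inv_card_mul_sum_character_mul_eq hV (fun i => (m i : ℂ)) j, twistedIndicator]
    congr 1
    calc ∑ g, (∑ i, (m i : ℂ) * (V i).character g) * (V j).character g⁻¹
        = ∑ g, ∑ v with v * ε v = g, (V j).character (v * ε v)⁻¹ :=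
          sum_congr rfl fun g _ => by
            rw [← hm, hρ, ← nsmul_eq_mul, ← sum_const]
            exact sum_congr rfl fun v hv => by rw [(mem_filter.1 hv).2]
      _ = ∑ v, (V j).character (v * ε v)⁻¹ := sum_fiberwise _ _ _
      _ = ∑ v, (V j).character (v * ε v) := sum_congr rfl fun v _ => by
          rw [← hchar, map_mul, hε v, FDRep.char_mul_comm]
  have := hV.1
  have hone (j : ι) : m j = 1 := by
    have hsq := twistedIndicator_sq_eq_one hε (V j) (hchar j)
    rw [← hind] at hsq
    simpa using (by exact_mod_cast hsq : m j ^ 2 = 1)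
  simp [hm, hone]

end CharacterDecomposition

section Cycles

open Equiv.Perm

variable {α : Type*} {σ u : Equiv.Perm α} {x y : α}

/-- A chosen point on the cycle of `σ` through `x`, depending only on that cycle. -/
noncomputable def cycleBase (σ : Equiv.Perm α) (x : α) : α :=
  (Quotient.mk (SameCycle.setoid σ) x).out

theorem cycleBase_eq_cycleBase_iff : cycleBase σ x = cycleBase σ y ↔ σ.SameCycle x y :=
  Quotient.out_inj.trans Quotient.eq

theorem sameCycle_cycleBase (σ : Equiv.Perm α) (x : α) : σ.SameCycle (cycleBase σ x) x :=
  Quotient.mk_out (s := SameCycle.setoid σ) x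

theorem zpow_apply_eq_zpow_apply_iff (i j : ℤ) :
    (σ ^ i) x = (σ ^ j) x ↔ (σ ^ (i - j)) x = x := by
  rw [sub_eq_neg_add, zpow_add, zpow_neg, mul_apply, inv_eq_iff_eq]

theorem zpow_neg_apply_eq_self_iff (i : ℤ) : (σ ^ (-i)) x = x ↔ (σ ^ i) x = x := by
  rw [zpow_neg, inv_eq_iff_eq, eq_comm]

theorem exists_semiconj_inv_sameCycle (σ : Equiv.Perm α) :
    ∃ s : Equiv.Perm α, Function.Semiconj s σ (σ⁻¹ : Equiv.Perm α) ∧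
      ∀ x, σ.SameCycle x (s x) := by
  choose k hk using fun x => sameCycle_cycleBase σ x
  let s : α → α := fun x => (σ ^ (-k x)) (cycleBase σ x)
  have hs (x : α) (i : ℤ) : s ((σ ^ i) (cycleBase σ x)) = (σ ^ (-i)) (cycleBase σ x) := by
    have hbase : cycleBase σ ((σ ^ i) (cycleBase σ x)) = cycleBase σ x :=
      cycleBase_eq_cycleBase_iff.2 (sameCycle_zpow_left.2 (sameCycle_cycleBase σ x))
    have hpow := hk ((σ ^ i) (cycleBase σ x))
    rw [hbase, zpow_apply_eq_zpow_apply_iff] at hpow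
    simp only [s, hbase]
    rwa [zpow_apply_eq_zpow_apply_iff, ← zpow_neg_apply_eq_self_iff, neg_sub_neg, neg_sub]
  have hinv : Function.Involutive s := fun x => by
    change s ((σ ^ (-k x)) (cycleBase σ x)) = x
    rw [hs, neg_neg, hk]
  refine ⟨hinv.toPerm, fun x => ?_, fun x => ?_⟩
  · change s (σ x) = σ⁻¹ (s x)
    conv_lhs => rw [← hk x, ← mul_apply, ← zpow_one_add, hs, neg_add, zpow_add, zpow_neg_one]
    rfl
  · exact sameCycle_zpow_right.2 (sameCycle_cycleBase σ x).symm

end Cycles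

section Coboundaries

open Equiv.Perm

variable {α A : Type*}

theorem birkhoffSum_comp_of_semiconj {M β : Type*} [AddCommMonoid M] {f : α → α} {f' : β → β}
    {u : α → β} (h : Function.Semiconj u f f') (g : β → M) (n : ℕ) (x : α) :
    birkhoffSum f (g ∘ u) n x = birkhoffSum f' g n (u x) := by
  simp only [birkhoffSum, Function.comp_apply, (h.iterate_right _).eq]

theorem birkhoffSum_inv_comp_inv [AddCommMonoid A] (σ : Equiv.Perm α) (g : α → A) (n : ℕ) (x : α) :
    birkhoffSum (σ⁻¹ : Equiv.Perm α) (g ∘ (σ⁻¹ : Equiv.Perm α)) n (σ^[n] x) =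
      birkhoffSum σ g n x := by
  induction n with
  | zero => simp
  | succ n ih =>
    rw [birkhoffSum_succ', birkhoffSum_succ, Function.iterate_succ_apply', Function.comp_apply,
      ← mul_apply, inv_mul_cancel, one_apply, ih, add_comm]

theorem isPeriodicPt_of_sameCycle {σ : Equiv.Perm α} {n : ℕ} {x y : α} (h : σ.SameCycle x y)
    (hx : Function.IsPeriodicPt σ n x) : Function.IsPeriodicPt σ n y := by
  obtain ⟨i, rfl⟩ := h
  exact hx.map fun z => DFunLike.congr_fun (Commute.zpow_left (Commute.refl σ) i) z

variable [AddCommGroup A] {σ u v : Equiv.Perm α}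

theorem birkhoffSum_eq_of_sameCycle [Finite α] {n : ℕ} {x y : α}
    (hx : Function.IsPeriodicPt σ n x) (g : α → A) (h : σ.SameCycle x y) :
    birkhoffSum σ g n x = birkhoffSum σ g n y := by
  obtain ⟨k, rfl⟩ := h.exists_nat_pow_eq
  rw [← iterate_eq_pow]
  induction k with
  | zero => rfl
  | succ k ih =>
    rw [Function.iterate_succ_apply', ih (iterate_eq_pow σ k ▸ sameCycle_pow_right.2 .rfl),
      eq_comm, ← sub_eq_zero, birkhoffSum_apply_sub_birkhoffSum, (hx.apply_iterate k).eq, sub_self]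

/-- `f` is a coboundary for the dynamics of `σ`: the equation `y ∘ σ = y + f` has a solution. -/
def IsCoboundary (σ : Equiv.Perm α) (f : α → A) : Prop :=
  ∃ y : α → A, ∀ x, y (σ x) = y x + f x

theorem birkhoffSum_eq_sub {f y : α → A} (h : ∀ x, y (σ x) = y x + f x) (n : ℕ) (x : α) :
    birkhoffSum σ f n x = y (σ^[n] x) - y x := by
  induction n with
  | zero => simp
  | succ n ih => rw [birkhoffSum_succ, ih, Function.iterate_succ_apply', h]; abel

theorem isCoboundary_iff_birkhoffSum_eq_zero [Finite α] {f : α → A} :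
    IsCoboundary σ f ↔ ∀ n x, Function.IsPeriodicPt σ n x → birkhoffSum σ f n x = 0 := by
  refine ⟨fun ⟨y, hy⟩ n x hx => by rw [birkhoffSum_eq_sub hy, hx.eq, sub_self], fun h => ?_⟩
  have hle (x : α) (m n : ℕ) (hmn : m ≤ n) (he : σ^[m] x = σ^[n] x) :
      birkhoffSum σ f m x = birkhoffSum σ f n x := by
    obtain ⟨d, rfl⟩ := Nat.exists_eq_add_of_le hmn
    have hper : Function.IsPeriodicPt σ d (σ^[m] x) := by
      rw [Function.IsPeriodicPt, Function.IsFixedPt, ← Function.iterate_add_apply, add_comm, ← he]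
    rw [birkhoffSum_add, h d _ hper, add_zero]
  have hwd (x : α) (m n : ℕ) (he : σ^[m] x = σ^[n] x) :
      birkhoffSum σ f m x = birkhoffSum σ f n x :=
    (le_total m n).elim (hle x m n · he) fun hnm => (hle x n m hnm he.symm).symm
  choose k hk using fun x => (sameCycle_cycleBase σ x).exists_nat_pow_eq
  simp only [← iterate_eq_pow] at hk
  refine ⟨fun x => birkhoffSum σ f (k x) (cycleBase σ x), fun x => ?_⟩
  have hbase : cycleBase σ (σ x) = cycleBase σ x :=
    cycleBase_eq_cycleBase_iff.2 (sameCycle_apply_left.2 .rfl)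
  have hstep := hwd (cycleBase σ x) (k (σ x)) (k x + 1) <| by
    rw [Function.iterate_succ_apply', hk, ← hbase, hk]
  beta_reduce
  rw [hbase, hstep, birkhoffSum_succ, hk]

theorem isCoboundary_add_comp_congr [Finite α] (hu : Commute u σ) (hv : Commute v σ)
    (huv : ∀ x, σ.SameCycle (u x) (v x)) (z : α → A) :
    IsCoboundary σ (z + z ∘ u) ↔ IsCoboundary σ (z + z ∘ v) := by
  have hsemi {w : Equiv.Perm α} (hw : Commute w σ) : Function.Semiconj w σ σ :=
    DFunLike.congr_fun hw
  simp only [isCoboundary_iff_birkhoffSum_eq_zero, birkhoffSum_add']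
  refine forall₃_congr fun n x hx => ?_
  rw [birkhoffSum_comp_of_semiconj (hsemi hu), birkhoffSum_comp_of_semiconj (hsemi hv),
    birkhoffSum_eq_of_sameCycle (hx.map (hsemi hu)) z (huv x)]

theorem isCoboundary_comp_inv_comp_sub_of_semiconj_inv [Finite α] {s : Equiv.Perm α}
    (hs : Function.Semiconj s σ (σ⁻¹ : Equiv.Perm α))
    (hcycle : ∀ x, σ.SameCycle x (s x)) (z : α → A) :
    IsCoboundary σ ((z ∘ (σ⁻¹ : Equiv.Perm α)) ∘ s - z) := by
  refine isCoboundary_iff_birkhoffSum_eq_zero.2 fun n x hx => ?_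
  have hsx := isPeriodicPt_of_sameCycle (hcycle x) hx
  rw [birkhoffSum_sub, birkhoffSum_comp_of_semiconj hs, sub_eq_zero,
    birkhoffSum_eq_of_sameCycle hx z (hcycle x), ← birkhoffSum_inv_comp_inv σ z n (s x), hsx.eq]

end Coboundaries

section OrderSign

variable {α : Type*} [LinearOrder α]

theorem lt_iff_lt_iff_swap {β : Type*} [LinearOrder β] {f : α → β}
    (hf : Function.Injective f) (x y : α) : (x < y ↔ f x < f y) ↔ (y < x ↔ f y < f x) := by
  have hne : x ≠ y → f x ≠ f y := hf.ne
  grind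

/-- `1` if `σ` preserves the order of the two elements of a pair, `-1` if it reverses it. -/
def orderSign (σ : Equiv.Perm α) : Sym2 α → ℤ :=
  Sym2.lift ⟨fun x y => if (x < y ↔ σ x < σ y) then 1 else -1, fun x y =>
    if_congr (lt_iff_lt_iff_swap σ.injective x y) rfl rfl⟩

theorem orderSign_mk (σ : Equiv.Perm α) (x y : α) :
    orderSign σ s(x, y) = if (x < y ↔ σ x < σ y) then 1 else -1 := rfl

theorem orderSign_mul (a b : Equiv.Perm α) (p : Sym2 α) :
    orderSign (a * b) p = orderSign a (p.map b) * orderSign b p := by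
  induction p with
  | _ x y =>
    simp only [Sym2.map_mk, orderSign_mk, Equiv.Perm.mul_apply]
    by_cases x < y <;> by_cases b x < b y <;> by_cases a (b x) < a (b y) <;> simp [*]

theorem orderSign_eq_ite_of_lt {σ : Equiv.Perm α} {x y : α} (h : x < y) :
    orderSign σ s(x, y) = if σ y < σ x then -1 else 1 := by
  have hne : σ x ≠ σ y := σ.injective.ne h.ne
  rw [orderSign_mk]
  grind

theorem orderSign_eq_ite_mul_ite (σ : Equiv.Perm α) (x y : α) :
    orderSign σ s(x, y) = (if x < y then 1 else -1) * if σ x < σ y then 1 else -1 := by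
  rw [orderSign_mk]
  by_cases x < y <;> by_cases σ x < σ y <;> simp [*]

/-- `1` if `u` moves `x` upwards, `-1` otherwise. -/
def ascentSign (u : Equiv.Perm α) (x : α) : ℤ := if x < u x then 1 else -1

theorem ascentSign_mul_self (u : Equiv.Perm α) (x : α) : ascentSign u x * ascentSign u x = 1 := by
  rw [ascentSign]
  split_ifs <;> rfl

end OrderSign

section MovedPairs

variable {α : Type*} [Fintype α] [DecidableEq α]

/-- The pairs `{x, u x}` with `u x ≠ x`; for an involution `u` these are its 2-cycles. -/
def movedPairs (u : Equiv.Perm α) : Finset (Sym2 α) :=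
  (univ.filter fun x => u x ≠ x).image fun x => s(x, u x)

theorem prod_movedPairs {M : Type*} [CommMonoid M] {u : Equiv.Perm α}
    (hu : Function.Involutive u) {T : Finset α} (hT : ∀ x, u x ∈ T ↔ x ∉ T ∧ u x ≠ x)
    (f : Sym2 α → M) : ∏ p ∈ movedPairs u, f p = ∏ x ∈ T, f s(x, u x) := by
  have hfix : ∀ x ∈ T, u x ≠ x := fun x hx => by
    have := hT (u x)
    rw [hu x] at this
    exact (this.1 hx).2.symm
  have himage : movedPairs u = T.image fun x => s(x, u x) := by
    ext p
    simp only [movedPairs, mem_image, mem_filter, mem_univ, true_and]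
    refine ⟨?_, fun ⟨x, hx, hp⟩ => ⟨x, hfix x hx, hp⟩⟩
    rintro ⟨x, hx, rfl⟩
    by_cases hxT : x ∈ T
    · exact ⟨x, hxT, rfl⟩
    · exact ⟨u x, (hT x).2 ⟨hxT, hx⟩, by rw [hu x, Sym2.eq_swap]⟩
  rw [himage, prod_image]
  intro x hx y hy hxy
  rcases Sym2.eq_iff.1 hxy with ⟨h, -⟩ | ⟨h, -⟩
  · exact h
  · exact absurd hy ((hT y).1 (h ▸ hx)).1

theorem movedPairs_mul_of_disjoint {u v : Equiv.Perm α} (h : u.Disjoint v) :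
    movedPairs (u * v) = movedPairs u ∪ movedPairs v := by
  have hmoved : (univ.filter fun x => (u * v) x ≠ x) =
      (univ.filter fun x => u x ≠ x) ∪ univ.filter fun x => v x ≠ x := by
    ext x
    simp only [mem_filter, mem_univ, true_and, mem_union, ne_eq, h.mul_apply_eq_iff, not_and_or]
  rw [movedPairs, hmoved, image_union]
  refine congrArg₂ _ (image_congr fun x hx => ?_) (image_congr fun x hx => ?_)
  · rw [Equiv.Perm.mul_apply, (h x).resolve_left (by simpa using hx)]
  · rw [Equiv.Perm.mul_apply, (h (v x)).resolve_right (by simpa using hx)]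

end MovedPairs

section PairSign

variable {α : Type*} [Fintype α] [LinearOrder α]

/-- The product over the 2-cycles `{x, u x}` of an involution `u` of the sign which is `-1` exactly
when `{x, u x}` is an inversion of `σ`. -/
def pairSign (σ u : Equiv.Perm α) : ℤ := ∏ p ∈ movedPairs u, orderSign σ p

theorem pairSign_mul (a b u : Equiv.Perm α) :
    pairSign (a * b) u = pairSign a (b * u * b⁻¹) * pairSign b u := by
  have hconj : movedPairs (b * u * b⁻¹) = (movedPairs u).image (Sym2.map b) := by
    ext p
    simp only [movedPairs, mem_image, mem_filter, mem_univ, true_and, exists_exists_and_eq_and,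
      Sym2.map_mk]
    rw [← b.exists_congr_right]
    simp
  rw [pairSign, pairSign, pairSign, hconj, prod_image (Sym2.map.injective b.injective).injOn,
    ← prod_mul_distrib]
  exact prod_congr rfl fun p _ => orderSign_mul a b p

theorem pairSign_mul_of_disjoint (σ : Equiv.Perm α) {u v : Equiv.Perm α} (h : u.Disjoint v) :
    pairSign σ (u * v) = pairSign σ u * pairSign σ v := by
  rw [pairSign, movedPairs_mul_of_disjoint h, prod_union, pairSign, pairSign]
  simp only [movedPairs, disjoint_left, mem_image, mem_filter, mem_univ, true_and]
  rintro _ ⟨x, hx, rfl⟩ ⟨y, hy, he⟩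
  have hux : u (u x) ≠ u x := fun he => hx (u.injective he)
  rcases Sym2.eq_iff.1 he with ⟨rfl, -⟩ | ⟨rfl, -⟩
  · exact (h y).elim hx hy
  · exact (h (u x)).elim hux hy

theorem pairSign_eq_neg_one_pow {n : ℕ} (σ : Equiv.Perm (Fin n)) {u : Equiv.Perm (Fin n)}
    (hu : Function.Involutive u) : pairSign σ u = (-1) ^ #(invPairs σ ∩ pairSet u) := by
  have hT (x : Fin n) : u x ∈ univ.filter (fun y => y < u y) ↔
      x ∉ univ.filter (fun y => y < u y) ∧ u x ≠ x := by
    simpa [hu x] using lt_iff_le_and_ne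
  have hsign (x : Fin n) (hx : x ∈ univ.filter fun y => y < u y) :
      orderSign σ s(x, u x) = if σ (u x) < σ x then -1 else 1 :=
    orderSign_eq_ite_of_lt (mem_filter.1 hx).2
  rw [pairSign, prod_movedPairs hu hT, prod_congr rfl hsign, prod_ite, prod_const, prod_const_one,
    mul_one]
  congr 1
  refine card_bij' (fun x _ => (x, u x)) (fun p _ => p.1) ?_ ?_ ?_ ?_
  all_goals simp +contextual [invPairs, pairSet, hu _]

end PairSign

section CycleShift

open Equiv.Perm

variable {α : Type*} {σ u : Equiv.Perm α} {x y : α}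

theorem cycleBase_zpow_apply (i : ℤ) (x : α) : cycleBase σ ((σ ^ i) x) = cycleBase σ x :=
  cycleBase_eq_cycleBase_iff.2 (sameCycle_zpow_left.2 .rfl)

theorem apply_zpow_apply_of_commute (hu : Commute u σ) (i : ℤ) (x : α) :
    u ((σ ^ i) x) = (σ ^ i) (u x) :=
  DFunLike.congr_fun (hu.zpow_right i) x

theorem cycleBase_apply_zpow_apply (hu : Commute u σ) (i : ℤ) (x : α) :
    cycleBase σ (u ((σ ^ i) x)) = cycleBase σ (u x) := by
  rw [apply_zpow_apply_of_commute hu, cycleBase_zpow_apply]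

theorem cycleBase_apply_cycleBase (hu : Commute u σ) (x : α) :
    cycleBase σ (u (cycleBase σ x)) = cycleBase σ (u x) := by
  obtain ⟨i, hi⟩ := (sameCycle_cycleBase σ x).symm
  rw [← hi, cycleBase_apply_zpow_apply hu]

theorem zpow_apply_eq_self_iff_period_dvd {i : ℤ} :
    (σ ^ i) x = x ↔ (MulAction.period σ x : ℤ) ∣ i :=
  MulAction.zpow_smul_eq_iff_period_dvd (g := σ) (a := x)

theorem period_eq_of_sameCycle (h : σ.SameCycle x y) :
    MulAction.period σ x = MulAction.period σ y := by
  obtain ⟨i, rfl⟩ := h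
  refine Nat.dvd_right_iff_eq.1 fun n => ?_
  have hcomm : Commute (σ ^ (n : ℤ)) σ := (Commute.refl σ).zpow_left n
  rw [← Int.natCast_dvd_natCast, ← Int.natCast_dvd_natCast, ← zpow_apply_eq_self_iff_period_dvd,
    ← zpow_apply_eq_self_iff_period_dvd, apply_zpow_apply_of_commute hcomm,
    EmbeddingLike.apply_eq_iff_eq]

theorem sameCycle_apply_iff_of_commute (hu : Commute u σ) (hinv : Function.Involutive u)
    (hx : σ.SameCycle x (u x)) : σ.SameCycle x (u y) ↔ σ.SameCycle x y := by
  have hstable {z : α} (hz : σ.SameCycle x z) : σ.SameCycle x (u z) := by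
    obtain ⟨i, rfl⟩ := hz
    rw [apply_zpow_apply_of_commute hu]
    exact sameCycle_zpow_right.2 hx
  exact ⟨fun h => hinv y ▸ hstable h, hstable⟩

theorem exists_lt_period_pow_apply_eq [Finite α] (h : σ.SameCycle x y) :
    ∃ i < MulAction.period σ x, (σ ^ i) x = y := by
  obtain ⟨i, rfl⟩ := h.exists_nat_pow_eq
  refine ⟨i % MulAction.period σ x, Nat.mod_lt _ ?_, MulAction.pow_mod_period_smul (m := σ) i⟩
  exact MulAction.period_pos_of_orderOf_pos (orderOf_pos σ) x

theorem injOn_pow_apply_Iio_period (σ : Equiv.Perm α) (x : α) :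
    Set.InjOn (fun i : ℕ => (σ ^ i) x) (Set.Iio (MulAction.period σ x)) := by
  have hinj := Function.iterate_injOn_Iio_minimalPeriod (f := σ) (x := x)
  simp only [iterate_eq_pow] at hinj
  exact hinj

theorem apply_eq_self_of_odd_period (hu : Function.Involutive u) (hcomm : Commute u σ)
    (hx : σ.SameCycle x (u x)) (hodd : Odd (MulAction.period σ x)) : u x = x := by
  obtain ⟨i, hi⟩ := hx
  have hsq : (σ ^ (2 * i)) x = x := by
    rw [two_mul, zpow_add, mul_apply, hi, ← apply_zpow_apply_of_commute hcomm, hi, hu x]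
  rw [zpow_apply_eq_self_iff_period_dvd] at hsq
  rw [← hi, zpow_apply_eq_self_iff_period_dvd]
  refine IsCoprime.dvd_of_dvd_mul_left ?_ hsq
  exact Nat.isCoprime_iff_coprime.2 (Nat.coprime_two_right.2 hodd)

theorem commute_of_mul_self_eq {M : Type*} [Monoid M] {a b : M} (h : a * a = b) : Commute a b :=
  h ▸ (Commute.refl a).mul_right (Commute.refl a)

theorem odd_period_of_mul_self_eq {τ : Equiv.Perm α} (hτ : τ * τ = σ)
    (hx : σ.SameCycle x (τ x)) : Odd (MulAction.period σ x) := by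
  have hcomm : Commute τ σ := commute_of_mul_self_eq hτ
  obtain ⟨i, hi⟩ := hx
  have hsq : (σ ^ (2 * i)) x = (σ ^ (1 : ℤ)) x := by
    rw [two_mul, zpow_add, mul_apply, hi, ← apply_zpow_apply_of_commute hcomm, hi, zpow_one,
      ← mul_apply, hτ]
  rw [zpow_apply_eq_zpow_apply_iff, zpow_apply_eq_self_iff_period_dvd] at hsq
  rw [← Nat.not_even_iff_odd, even_iff_two_dvd]
  intro h
  have := (Int.natCast_dvd_natCast.2 h).trans hsq
  omega

/-- The permutation which on each cycle of `σ` is the power `σ ^ E b`, where `b` is the base point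
of that cycle. -/
noncomputable def cycleShift (σ : Equiv.Perm α) (E : α → ℤ) : Equiv.Perm α where
  toFun x := (σ ^ E (cycleBase σ x)) x
  invFun x := (σ ^ (-E (cycleBase σ x))) x
  left_inv x := by simp only [cycleBase_zpow_apply, ← mul_apply, ← zpow_add, neg_add_cancel,
    zpow_zero, one_apply]
  right_inv x := by simp only [cycleBase_zpow_apply, ← mul_apply, ← zpow_add, add_neg_cancel,
    zpow_zero, one_apply]

theorem cycleShift_apply (E : α → ℤ) (x : α) :
    cycleShift σ E x = (σ ^ E (cycleBase σ x)) x := rfl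

theorem cycleShift_commute (σ : Equiv.Perm α) (E : α → ℤ) : Commute (cycleShift σ E) σ := by
  ext x
  have hbase : cycleBase σ (σ x) = cycleBase σ x := cycleBase_zpow_apply 1 x
  simp only [mul_apply, cycleShift_apply, hbase]
  exact (apply_zpow_apply_of_commute (Commute.refl σ) _ x).symm

theorem cycleBase_apply_cycleShift (hu : Commute u σ) (E : α → ℤ) (x : α) :
    cycleBase σ (u (cycleShift σ E x)) = cycleBase σ (u x) :=
  cycleBase_apply_zpow_apply hu _ x

theorem apply_cycleShift_apply_cycleShift (hu : Commute u σ) (E : α → ℤ) (x : α) :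
    u (cycleShift σ E (u (cycleShift σ E x))) =
      (σ ^ (E (cycleBase σ x) + E (cycleBase σ (u x)))) (u (u x)) := by
  rw [cycleShift_apply _ (u _), cycleBase_apply_cycleShift hu, cycleShift_apply,
    apply_zpow_apply_of_commute hu, apply_zpow_apply_of_commute hu, apply_zpow_apply_of_commute hu,
    ← mul_apply, ← zpow_add, add_comm]

end CycleShift

section CommutingSign

open Equiv.Perm

variable {α : Type*} [Fintype α] [LinearOrder α] {σ u : Equiv.Perm α}

theorem pairSign_eq_prod_ascentSign (hu : Function.Involutive u) (hcomm : Commute u σ)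
    {T : Finset α} (hT : ∀ x, u x ∈ T ↔ x ∉ T ∧ u x ≠ x) :
    pairSign σ u = (∏ x ∈ T, ascentSign u x) * ∏ x ∈ T, ascentSign u (σ x) := by
  rw [pairSign, prod_movedPairs hu hT, ← prod_mul_distrib]
  refine prod_congr rfl fun x _ => ?_
  rw [orderSign_eq_ite_mul_ite, ascentSign, ascentSign, ← mul_apply u σ, hcomm.eq, mul_apply]

theorem pairSign_eq_one (hu : Function.Involutive u) (hcomm : Commute u σ)
    (hcycle : ∀ x, σ.SameCycle x (u x) → u x = x) : pairSign σ u = 1 := by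
  let T : Finset α := univ.filter fun x => cycleBase σ x < cycleBase σ (u x)
  have hT (x : α) : u x ∈ T ↔ x ∉ T ∧ u x ≠ x := by
    have hfix : cycleBase σ x = cycleBase σ (u x) → u x = x := fun h =>
      hcycle x (cycleBase_eq_cycleBase_iff.1 h)
    simp only [T, mem_filter, mem_univ, true_and, hu x]
    grind
  have hσT (x : α) : x ∈ T ↔ σ x ∈ T := by
    have hx : cycleBase σ (σ x) = cycleBase σ x := cycleBase_zpow_apply 1 x
    have hux : cycleBase σ (u (σ x)) = cycleBase σ (u x) := cycleBase_apply_zpow_apply hcomm 1 x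
    simp only [T, mem_filter, mem_univ, true_and, hx, hux]
  have hshift : ∏ x ∈ T, ascentSign u (σ x) = ∏ x ∈ T, ascentSign u x :=
    prod_equiv σ hσT fun _ _ => rfl
  rw [pairSign_eq_prod_ascentSign hu hcomm hT, hshift, ← prod_mul_distrib]
  exact prod_eq_one fun x _ => ascentSign_mul_self u x

end CommutingSign

section HalfTurn

open Equiv.Perm

variable {α : Type*} [DecidableEq α] {σ u : Equiv.Perm α} {x y : α} {k : ℕ}

/-- The permutation `σ ^ k` on the cycle of `σ` through `x` and the identity elsewhere; when that
cycle has length `2 * k`, this is its half turn. -/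
noncomputable def cycleTurn (σ : Equiv.Perm α) (x : α) (k : ℕ) : Equiv.Perm α :=
  cycleShift σ fun b => if b = cycleBase σ x then k else 0

theorem cycleTurn_apply_of_sameCycle (k : ℕ) (h : σ.SameCycle x y) :
    cycleTurn σ x k y = (σ ^ k) y := by
  rw [cycleTurn, cycleShift_apply, if_pos (cycleBase_eq_cycleBase_iff.2 h.symm), zpow_natCast]

theorem cycleTurn_apply_of_not_sameCycle (k : ℕ) (h : ¬ σ.SameCycle x y) :
    cycleTurn σ x k y = y := by
  rw [cycleTurn, cycleShift_apply, if_neg fun hb => h (cycleBase_eq_cycleBase_iff.1 hb).symm,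
    zpow_zero, one_apply]

theorem involutive_mul_cycleTurn (hk : MulAction.period σ x = 2 * k) (hu : Commute u σ)
    (hinv : Function.Involutive u) (hx : σ.SameCycle x (u x)) :
    Function.Involutive (u * cycleTurn σ x k) := by
  intro y
  have hiff := sameCycle_apply_iff_of_commute hu hinv hx (y := y)
  simp only [sameCycle_comm (x := x), ← cycleBase_eq_cycleBase_iff] at hiff
  rw [mul_apply, mul_apply, cycleTurn, apply_cycleShift_apply_cycleShift hu, hinv y]
  simp only [hiff]
  split_ifs with hy
  · have hper := period_eq_of_sameCycle (cycleBase_eq_cycleBase_iff.1 hy)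
    rw [zpow_apply_eq_self_iff_period_dvd, hper, hk]
    exact ⟨1, by push_cast; ring⟩
  · rfl

theorem involutive_cycleTurn (hk : MulAction.period σ x = 2 * k) :
    Function.Involutive (cycleTurn σ x k) := by
  simpa using involutive_mul_cycleTurn hk (Commute.one_left σ) (fun _ => rfl) .rfl

theorem disjoint_cycleTurn (hfix : ∀ y, σ.SameCycle x y → u y = y) (k : ℕ) :
    u.Disjoint (cycleTurn σ x k) := fun y => by
  by_cases hy : σ.SameCycle x y
  · exact .inl (hfix y hy)
  · exact .inr (cycleTurn_apply_of_not_sameCycle k hy)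

theorem apply_eq_self_or_eq_cycleTurn (hk : MulAction.period σ x = 2 * k)
    (hu : Commute u σ) (hinv : Function.Involutive u) (hx : σ.SameCycle x (u x)) :
    (∀ y, σ.SameCycle x y → u y = y) ∨ ∀ y, σ.SameCycle x y → u y = cycleTurn σ x k y := by
  obtain ⟨i, hi⟩ := hx
  have hpow {y : α} (hy : σ.SameCycle x y) : u y = (σ ^ i) y := by
    obtain ⟨j, rfl⟩ := hy
    rw [apply_zpow_apply_of_commute hu, ← hi, ← mul_apply, ← mul_apply, ← zpow_add, ← zpow_add,
      add_comm]
  have hsq : (σ ^ (i + i)) x = x := by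
    rw [zpow_add, mul_apply, ← hpow (sameCycle_zpow_right.2 .rfl), hi, hinv x]
  rw [zpow_apply_eq_self_iff_period_dvd, hk] at hsq
  obtain ⟨c, hc⟩ : (k : ℤ) ∣ i := by
    obtain ⟨c, hc⟩ := hsq
    exact ⟨c, by push_cast at hc; linarith⟩
  rcases Int.even_or_odd' c with ⟨d, rfl | rfl⟩
  · refine .inl fun y hy => ?_
    rw [hpow hy, zpow_apply_eq_self_iff_period_dvd, ← period_eq_of_sameCycle hy, hk]
    exact ⟨d, by push_cast; linarith⟩
  · refine .inr fun y hy => ?_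
    rw [hpow hy, cycleTurn_apply_of_sameCycle k hy, ← zpow_natCast, zpow_apply_eq_zpow_apply_iff,
      zpow_apply_eq_self_iff_period_dvd, ← period_eq_of_sameCycle hy, hk]
    exact ⟨d, by push_cast; linarith⟩

theorem cycleTurn_apply_mem_image_pow_iff [Finite α] (hk : MulAction.period σ x = 2 * k) (y : α) :
    cycleTurn σ x k y ∈ (range k).image (fun j => (σ ^ j) x) ↔
      y ∉ (range k).image (fun j => (σ ^ j) x) ∧ cycleTurn σ x k y ≠ y := by
  have hmem {i : ℕ} (hi : i < 2 * k) :
      (σ ^ i) x ∈ (range k).image (fun j => (σ ^ j) x) ↔ i < k := by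
    simp only [mem_image, mem_range]
    refine ⟨fun ⟨j, hj, hji⟩ => ?_, fun h => ⟨i, h, rfl⟩⟩
    rwa [← injOn_pow_apply_Iio_period σ x (Set.mem_Iio.2 (hk ▸ by omega))
      (Set.mem_Iio.2 (hk ▸ hi)) hji]
  by_cases hy : σ.SameCycle x y
  · obtain ⟨i, hi, rfl⟩ := exists_lt_period_pow_apply_eq hy
    rw [hk] at hi
    rw [cycleTurn_apply_of_sameCycle k hy, ← mul_apply, ← pow_add]
    rcases lt_or_ge i k with hik | hik
    · simp only [hmem hi, hmem (show k + i < 2 * k by omega)]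
      omega
    · have hturn : (σ ^ (k + i)) x = (σ ^ (i - k)) x := by
        rw [show k + i = i - k + MulAction.period σ x by omega, pow_add, mul_apply]
        exact congrArg _ (MulAction.pow_period_smul σ x)
      have hmem' := (hmem (show i - k < 2 * k by omega)).2 (by omega)
      have hnmem : (σ ^ i) x ∉ (range k).image fun j => (σ ^ j) x := by
        rw [hmem hi]
        omega
      rw [hturn]
      exact iff_of_true hmem' ⟨hnmem, ne_of_mem_of_not_mem hmem' hnmem⟩
  · rw [cycleTurn_apply_of_not_sameCycle k hy]
    refine iff_of_false (fun h => hy ?_) fun h => h.2 rfl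
    obtain ⟨j, -, rfl⟩ := mem_image.1 h
    exact sameCycle_pow_right.2 .rfl

end HalfTurn

section HalfTurnSign

open Equiv.Perm

variable {α : Type*} [Fintype α] [LinearOrder α] {σ u : Equiv.Perm α} {x : α} {k : ℕ}

theorem pairSign_cycleTurn (hk : MulAction.period σ x = 2 * k) (hpos : 0 < k) :
    pairSign σ (cycleTurn σ x k) = -1 := by
  let o (j : ℕ) : ℤ := ascentSign (cycleTurn σ x k) ((σ ^ j) x)
  have hinj : Set.InjOn (fun j => (σ ^ j) x) (range k : Set ℕ) :=
    (injOn_pow_apply_Iio_period σ x).mono fun j hj => by simp_all; omega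
  have hprod : pairSign σ (cycleTurn σ x k) = (∏ j ∈ range k, o j) * ∏ j ∈ range k, o (j + 1) := by
    rw [pairSign_eq_prod_ascentSign (involutive_cycleTurn hk) (cycleShift_commute σ _)
      (cycleTurn_apply_mem_image_pow_iff hk), prod_image hinj, prod_image hinj]
    simp only [o, pow_succ', mul_apply]
  have htelescope : (∏ j ∈ range k, o (j + 1)) * o 0 = (∏ j ∈ range k, o j) * o k := by
    rw [← prod_range_succ', prod_range_succ]
  have hends : o 0 * o k = -1 := by
    have hx0 : x ≠ (σ ^ k) x := fun h =>
      hpos.ne (injOn_pow_apply_Iio_period σ x (Set.mem_Iio.2 (hk ▸ by omega))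
        (Set.mem_Iio.2 (hk ▸ by omega)) h)
    have hxk : (σ ^ k) ((σ ^ k) x) = x := by
      rw [← mul_apply, ← pow_add, ← two_mul, ← hk]
      exact MulAction.pow_period_smul σ x
    simp only [o, ascentSign, pow_zero, one_apply,
      cycleTurn_apply_of_sameCycle k (sameCycle_pow_right.2 (.refl σ x)), hxk]
    grind
  have hsq : (∏ j ∈ range k, o j) * ∏ j ∈ range k, o j = 1 := by
    rw [← prod_mul_distrib]
    exact prod_eq_one fun j _ => ascentSign_mul_self _ _
  have h0 : o 0 * o 0 = 1 := ascentSign_mul_self _ _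
  calc pairSign σ (cycleTurn σ x k)
      = (∏ j ∈ range k, o j) * (∏ j ∈ range k, o (j + 1)) * (o 0 * o 0) := by
        rw [hprod, h0, mul_one]
    _ = (∏ j ∈ range k, o j) * (∏ j ∈ range k, o j) * (o 0 * o k) := by
        linear_combination (∏ j ∈ range k, o j) * o 0 * htelescope
    _ = -1 := by rw [hsq, hends, one_mul]

theorem pairSign_mul_cycleTurn (hk : MulAction.period σ x = 2 * k) (hpos : 0 < k)
    (hu : Commute u σ) (hinv : Function.Involutive u) (hx : σ.SameCycle x (u x)) :
    pairSign σ (u * cycleTurn σ x k) = -pairSign σ u := by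
  have hneg {v : Equiv.Perm α} (hv : ∀ y, σ.SameCycle x y → v y = y) :
      pairSign σ (v * cycleTurn σ x k) = -pairSign σ v := by
    rw [pairSign_mul_of_disjoint σ (disjoint_cycleTurn hv k), pairSign_cycleTurn hk hpos,
      mul_neg_one]
  rcases apply_eq_self_or_eq_cycleTurn hk hu hinv hx with h | h
  · exact hneg h
  · have hturn : cycleTurn σ x k * cycleTurn σ x k = 1 := ext (involutive_cycleTurn hk)
    have hfix (y : α) (hy : σ.SameCycle x y) : (u * cycleTurn σ x k) y = y := by
      rw [mul_apply, ← h y hy, hinv y]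
    rw [eq_neg_iff_add_eq_zero, add_comm, ← eq_neg_iff_add_eq_zero, ← hneg hfix, mul_assoc, hturn,
      mul_one]

end HalfTurnSign

section SquareRoots

open Equiv.Perm

variable {α : Type*} {σ u v : Equiv.Perm α} {q : α → α} {x : α}

/-- The map induced on cycles of `σ` by a permutation `u` commuting with `σ`, each cycle being
represented by its base point. -/
noncomputable def cycleMap (σ u : Equiv.Perm α) (x : α) : α := cycleBase σ (u x)

theorem cycleMap_eq_cycleMap_iff : cycleMap σ u = cycleMap σ v ↔ ∀ x, σ.SameCycle (u x) (v x) :=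
  funext_iff.trans <| forall_congr' fun _ => cycleBase_eq_cycleBase_iff

theorem cycleMap_mul_cycleShift (hu : Commute u σ) (E : α → ℤ) :
    cycleMap σ (u * cycleShift σ E) = cycleMap σ u :=
  funext (cycleBase_apply_cycleShift hu E)

variable [LinearOrder α]

/-- A choice of exponents for which `u ↦ u * cycleShift σ (halvingExponent σ q)` turns involutions
into square roots of `σ`: on a cycle preserved by `q`, of odd length `d`, the power
`σ ^ ((d + 1) / 2)` is a square root; when `q` swaps two cycles, one power of `σ` is inserted on one
of them. -/
noncomputable def halvingExponent (σ : Equiv.Perm α) (q : α → α) (b : α) : ℤ :=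
  if q b = b then (MulAction.period σ b + 1) / 2 else if b < q b then 1 else 0

theorem mul_cycleShift_halvingExponent_apply (hu : Commute u σ)
    (hodd : ∀ x, σ.SameCycle x (u x) → Odd (MulAction.period σ x))
    (husq : ∀ x, σ.SameCycle x (u (u x))) (x : α) :
    (u * cycleShift σ (halvingExponent σ (cycleMap σ u)))
      ((u * cycleShift σ (halvingExponent σ (cycleMap σ u))) x) = σ (u (u x)) := by
  rw [mul_apply, mul_apply, apply_cycleShift_apply_cycleShift hu]
  have hb : cycleMap σ u (cycleBase σ x) = cycleBase σ (u x) := cycleBase_apply_cycleBase hu x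
  have hub : cycleMap σ u (cycleBase σ (u x)) = cycleBase σ x :=
    (cycleBase_apply_cycleBase hu (u x)).trans (cycleBase_eq_cycleBase_iff.2 (husq x).symm)
  simp only [halvingExponent, hb, hub]
  rcases eq_or_ne (cycleBase σ (u x)) (cycleBase σ x) with h | h
  · obtain ⟨k, hk⟩ := hodd x (cycleBase_eq_cycleBase_iff.1 h.symm)
    have hpow (i : ℤ) : (σ ^ i) (u (u x)) = σ (u (u x)) ↔ (MulAction.period σ x : ℤ) ∣ i - 1 := by
      rw [period_eq_of_sameCycle (husq x), ← zpow_apply_eq_self_iff_period_dvd,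
        ← zpow_apply_eq_zpow_apply_iff, zpow_one]
    rw [if_pos h, if_pos h.symm, h, period_eq_of_sameCycle (sameCycle_cycleBase σ x), hpow, hk]
    exact ⟨1, by push_cast; omega⟩
  · rcases lt_or_gt_of_ne h with hlt | hlt <;> simp [h, h.symm, hlt, hlt.not_gt]

theorem mul_cycleShift_halvingExponent_mul_self_iff
    (hodd : ∀ x, q x = cycleBase σ x → Odd (MulAction.period σ x)) :
    ((u * u = 1 ∧ u * σ = σ * u) ∧ cycleMap σ u = q) ↔
      u * cycleShift σ (halvingExponent σ q) * (u * cycleShift σ (halvingExponent σ q)) = σ ∧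
        cycleMap σ (u * cycleShift σ (halvingExponent σ q)) = q := by
  have hodd' (hq : cycleMap σ u = q) (x : α) (hx : σ.SameCycle x (u x)) :
      Odd (MulAction.period σ x) :=
    hodd x (hq ▸ cycleBase_eq_cycleBase_iff.2 hx.symm)
  have hshift := cycleShift_commute σ (halvingExponent σ q)
  constructor
  · rintro ⟨⟨hinv, hcomm⟩, hq⟩
    have hinv' : Function.Involutive u := DFunLike.congr_fun hinv
    refine ⟨ext fun x => ?_, (cycleMap_mul_cycleShift hcomm _).trans hq⟩
    have hsq := mul_cycleShift_halvingExponent_apply hcomm (hodd' hq) (fun x => by rw [hinv' x]) x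
    rwa [hq, hinv' x] at hsq
  · rintro ⟨hsq, hq⟩
    have hτ : Commute (u * cycleShift σ (halvingExponent σ q)) σ :=
      commute_of_mul_self_eq hsq
    have hcomm : Commute u σ := by
      simpa using hτ.mul_left hshift.inv_left
    rw [cycleMap_mul_cycleShift hcomm] at hq
    have husq (x : α) : σ.SameCycle x (u (u x)) := by
      rw [← cycleBase_eq_cycleBase_iff, ← mul_apply u u,
        ← cycleBase_apply_cycleShift (hcomm.mul_left hcomm) (halvingExponent σ q), mul_apply,
        ← cycleBase_apply_cycleShift hcomm (halvingExponent σ q)]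
      exact ((congrArg (cycleBase σ) (DFunLike.congr_fun hsq x)).trans
        (cycleBase_zpow_apply 1 x)).symm
    refine ⟨⟨ext fun x => σ.injective ?_, hcomm⟩, hq⟩
    have hsq' := mul_cycleShift_halvingExponent_apply hcomm (hodd' hq) husq x
    rwa [hq, ← mul_apply, hsq, eq_comm] at hsq'

variable [Fintype α]

theorem sum_pairSign_eq_card_of_odd
    (hodd : ∀ x, q x = cycleBase σ x → Odd (MulAction.period σ x)) :
    ∑ u with (u * u = 1 ∧ u * σ = σ * u) ∧ cycleMap σ u = q, pairSign σ u =
      #{τ | τ * τ = σ ∧ cycleMap σ τ = q} := by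
  have hcard : #{u | (u * u = 1 ∧ u * σ = σ * u) ∧ cycleMap σ u = q} =
      #{τ | τ * τ = σ ∧ cycleMap σ τ = q} :=
    card_equiv (Equiv.mulRight (cycleShift σ (halvingExponent σ q))) fun u => by
      simpa using mul_cycleShift_halvingExponent_mul_self_iff hodd
  rw [← hcard, card_eq_sum_ones, Nat.cast_sum, Nat.cast_one]
  refine sum_congr rfl fun u hu => ?_
  obtain ⟨⟨hinv, hcomm⟩, rfl⟩ := (mem_filter.1 hu).2
  have hinv' : Function.Involutive u := DFunLike.congr_fun hinv
  exact pairSign_eq_one hinv' hcomm fun x hx => apply_eq_self_of_odd_period hinv' hcomm hx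
    (hodd x (cycleBase_eq_cycleBase_iff.2 hx.symm))

theorem sum_pairSign_eq_zero_of_even (hx : q x = cycleBase σ x)
    (heven : Even (MulAction.period σ x)) :
    ∑ u with (u * u = 1 ∧ u * σ = σ * u) ∧ cycleMap σ u = q, pairSign σ u = 0 := by
  obtain ⟨k, hk⟩ := even_iff_exists_two_mul.1 heven
  have hpos : 0 < k := by
    have := MulAction.period_pos_of_orderOf_pos (orderOf_pos σ) x
    omega
  have hturn : cycleTurn σ x k * cycleTurn σ x k = 1 := ext (involutive_cycleTurn hk)
  have hcycle {u : Equiv.Perm α} (hu : cycleMap σ u = q) : σ.SameCycle x (u x) :=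
    cycleBase_eq_cycleBase_iff.1 (hx.symm.trans (congrFun hu.symm x))
  have hcommute : Commute (cycleTurn σ x k) σ := cycleShift_commute σ _
  refine sum_involution (fun u _ => u * cycleTurn σ x k) ?_ ?_ ?_ ?_
  · intro u hu
    obtain ⟨⟨hinv, hcomm⟩, hq⟩ := (mem_filter.1 hu).2
    rw [pairSign_mul_cycleTurn hk hpos hcomm (DFunLike.congr_fun hinv) (hcycle hq), add_neg_cancel]
  · intro u _ _ h
    have h1 := pairSign_cycleTurn hk hpos
    rw [mul_eq_left.1 h] at h1
    simp [pairSign, movedPairs] at h1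
  · intro u hu
    obtain ⟨⟨hinv, hcomm⟩, hq⟩ := (mem_filter.1 hu).2
    refine mem_filter.2 ⟨mem_univ _, ⟨ext ?_, Commute.mul_left hcomm hcommute⟩, ?_⟩
    · exact involutive_mul_cycleTurn hk hcomm (DFunLike.congr_fun hinv) (hcycle hq)
    · rw [cycleTurn, cycleMap_mul_cycleShift hcomm, hq]
  · intro u _
    rw [mul_assoc, hturn, mul_one]

theorem sum_pairSign_eq_card (σ : Equiv.Perm α) (q : α → α) :
    ∑ u with (u * u = 1 ∧ u * σ = σ * u) ∧ cycleMap σ u = q, pairSign σ u =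
      #{τ | τ * τ = σ ∧ cycleMap σ τ = q} := by
  by_cases hodd : ∀ x, q x = cycleBase σ x → Odd (MulAction.period σ x)
  · exact sum_pairSign_eq_card_of_odd hodd
  · push Not at hodd
    obtain ⟨x, hx, heven⟩ := hodd
    rw [Nat.not_odd_iff_even] at heven
    have hempty : ({τ | τ * τ = σ ∧ cycleMap σ τ = q} : Finset (Equiv.Perm α)) = ∅ := by
      refine filter_eq_empty_iff.2 fun τ _ ⟨hτ, hq⟩ => Nat.not_odd_iff_even.2 heven ?_
      subst hq
      exact odd_period_of_mul_self_eq hτ (cycleBase_eq_cycleBase_iff.1 hx.symm)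
    rw [sum_pairSign_eq_zero_of_even hx heven, hempty, card_empty, Nat.cast_zero]

theorem sum_pairSign_mul_eq_sum (W : Equiv.Perm α → ℤ)
    (hW : ∀ u v, Commute u σ → Commute v σ → (∀ x, σ.SameCycle (u x) (v x)) → W u = W v) :
    ∑ u with u * u = 1 ∧ u * σ = σ * u, pairSign σ u * W u = ∑ τ with τ * τ = σ, W τ := by
  rw [← sum_fiberwise _ (cycleMap σ), ← sum_fiberwise _ (cycleMap σ)]
  simp only [filter_filter]
  refine sum_congr rfl fun q _ => ?_
  obtain ⟨c, hc⟩ : ∃ c, ∀ u, Commute u σ → cycleMap σ u = q → W u = c := by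
    by_cases h : ∃ v, Commute v σ ∧ cycleMap σ v = q
    · obtain ⟨v, hv, rfl⟩ := h
      exact ⟨W v, fun u hu huv => hW u v hu hv (cycleMap_eq_cycleMap_iff.1 huv)⟩
    · exact ⟨0, fun u hu hq => absurd ⟨u, hu, hq⟩ h⟩
  calc ∑ u with (u * u = 1 ∧ u * σ = σ * u) ∧ cycleMap σ u = q, pairSign σ u * W u
      = (∑ u with (u * u = 1 ∧ u * σ = σ * u) ∧ cycleMap σ u = q, pairSign σ u) * c := by
        rw [sum_mul]
        refine sum_congr rfl fun u hu => ?_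
        obtain ⟨⟨-, hcomm⟩, hq⟩ := (mem_filter.1 hu).2
        rw [hc u hcomm hq]
    _ = ∑ τ with τ * τ = σ ∧ cycleMap σ τ = q, W τ := by
        rw [sum_pairSign_eq_card, ← nsmul_eq_mul, ← sum_const]
        refine sum_congr rfl fun τ hτ => ?_
        obtain ⟨hsq, hq⟩ := (mem_filter.1 hτ).2
        rw [hc τ (commute_of_mul_self_eq hsq) hq]

end SquareRoots

section Colourings

open Equiv.Perm

theorem apply_eq_of_sameCycle {α β : Type*} {σ : Equiv.Perm α} {k : α → β}
    (hk : ∀ x, k (σ x) = k x) {x y : α} (h : σ.SameCycle x y) : k x = k y := by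
  have hpow (m : ℕ) (z : α) : k ((σ ^ m) z) = k z := by
    have hsemi : Function.Semiconj k σ id := hk
    rw [coe_pow, (hsemi.iterate_right m).eq, Function.iterate_id, id]
  obtain ⟨i, rfl⟩ := h
  obtain ⟨m, rfl | rfl⟩ := i.eq_nat_or_neg
  · rw [zpow_natCast, hpow]
  · rw [zpow_neg, zpow_natCast, ← hpow m ((σ ^ m)⁻¹ x), ← mul_apply, mul_inv_cancel, one_apply]

variable {α R : Type*} [Fintype α] [DecidableEq α] [CommRing R] [Fintype R] [DecidableEq R]
  {σ u v : Equiv.Perm α}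

open scoped Classical in
/-- The common number of solutions of the colouring equations attached to an involution `u`
commuting with `σ` (`card_colourings_of_involutive`) and to a square root `u` of `σ`
(`card_colourings_of_mul_self_eq`). Both solution sets, when nonempty, are cosets of the group of
colourings invariant under `σ` and `u`. -/
noncomputable def colouringWeight (σ : Equiv.Perm α) (z : α → R) (u : Equiv.Perm α) : ℕ :=
  if IsCoboundary σ (z + z ∘ u) then
    #{k : α → R | (∀ x, k (σ x) = k x) ∧ ∀ x, k (u x) = k x} else 0

theorem colouringWeight_congr (hu : Commute u σ) (hv : Commute v σ)
    (huv : ∀ x, σ.SameCycle (u x) (v x)) (z : α → R) :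
    colouringWeight σ z u = colouringWeight σ z v := by
  have hcard : #{k : α → R | (∀ x, k (σ x) = k x) ∧ ∀ x, k (u x) = k x} =
      #{k : α → R | (∀ x, k (σ x) = k x) ∧ ∀ x, k (v x) = k x} :=
    congrArg card <| filter_congr fun k _ => and_congr_right fun hk => forall_congr' fun x => by
      rw [apply_eq_of_sameCycle hk (huv x)]
  classical
  rw [colouringWeight, colouringWeight, hcard]
  exact if_congr (isCoboundary_add_comp_congr hu hv huv z) rfl rfl

theorem card_colourings_of_involutive [Invertible (2 : R)] (hinv : u * u = 1) (hcomm : Commute u σ)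
    (z : α → R) :
    #{c : α → R | (∀ x, c (u x) = c x) ∧ ∀ x, c (σ x) = c x + z x + z (u x)} =
      colouringWeight σ z u := by
  have huu (x : α) : u (u x) = x := DFunLike.congr_fun hinv x
  have huσ (x : α) : u (σ x) = σ (u x) := DFunLike.congr_fun hcomm x
  rw [colouringWeight]
  split_ifs with h
  · obtain ⟨c, hc⟩ := h
    refine (card_equiv (Equiv.addLeft fun x => ⅟2 * (c x + c (u x))) fun k => ?_).symm
    simp only [Pi.add_apply, Function.comp_apply] at hc
    simp only [mem_filter, mem_univ, true_and, Equiv.coe_addLeft, Pi.add_apply, huu, huσ, hc]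
    have h2 := invOf_mul_self (2 : R)
    rw [and_comm]
    refine and_congr (forall_congr' fun x => ?_) (forall_congr' fun x => ?_)
    · rw [add_comm (c (u x)), add_right_inj]
    · constructor
      · intro h; linear_combination h + (z x + z (u x)) * h2
      · intro h; linear_combination h - (z x + z (u x)) * h2
  · refine card_eq_zero.2 <| filter_eq_empty_iff.2 fun c _ hc => h ⟨c, fun x => ?_⟩
    rw [hc.2, add_assoc]
    rfl

theorem card_colourings_of_mul_self_eq [Invertible (2 : R)] (hu : u * u = σ) (z : α → R) :
    #{c : α → R | ∀ x, c (u x) = c x + z x} = colouringWeight σ z u := by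
  have hσ (x : α) : u (u x) = σ x := DFunLike.congr_fun hu x
  rw [colouringWeight]
  split_ifs with h
  · obtain ⟨c, hc⟩ := h
    simp only [Pi.add_apply, Function.comp_apply] at hc
    refine (card_equiv (Equiv.addLeft fun x => c x + ⅟2 * (c (u x) - c x - z x)) fun k => ?_).symm
    have h2 := invOf_mul_self (2 : R)
    have hk : ((∀ x, k (σ x) = k x) ∧ ∀ x, k (u x) = k x) ↔ ∀ x, k (u x) = k x :=
      and_iff_right_of_imp fun h x => by rw [← hσ, h, h]
    simp only [mem_filter, mem_univ, true_and, Equiv.coe_addLeft, Pi.add_apply, hk, hσ, hc]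
    refine forall_congr' fun x => ?_
    constructor
    · intro h; linear_combination h - (c (u x) - c x - z x) * h2
    · intro h; linear_combination h + (c (u x) - c x - z x) * h2
  · refine card_eq_zero.2 <| filter_eq_empty_iff.2 fun c _ hc => h ⟨c, fun x => ?_⟩
    rw [← hσ, hc, hc, add_assoc]
    rfl

theorem sum_pairSign_mul_card_colourings {α : Type*} [Fintype α] [LinearOrder α]
    [Invertible (2 : R)] (σ : Equiv.Perm α) (z : α → R) :
    ∑ u with u * u = 1 ∧ u * σ = σ * u, pairSign σ u *
        #{c : α → R | (∀ x, c (u x) = c x) ∧ ∀ x, c (σ x) = c x + z x + z (u x)} =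
      ∑ τ with τ * τ = σ, (#{c : α → R | ∀ x, c (τ x) = c x + z x} : ℤ) := by
  have hsum := sum_pairSign_mul_eq_sum (σ := σ) (fun u => (colouringWeight σ z u : ℤ))
    fun u v hu hv huv => congrArg Nat.cast (colouringWeight_congr hu hv huv z)
  convert hsum using 1
  · refine sum_congr rfl fun u hu => ?_
    obtain ⟨hinv, hcomm⟩ := (mem_filter.1 hu).2
    rw [card_colourings_of_involutive hinv hcomm]
  · refine sum_congr rfl fun τ hτ => ?_
    rw [card_colourings_of_mul_self_eq (mem_filter.1 hτ).2]

end Colourings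

section GelfandModel

variable {r n : ℕ}

theorem Wreath.mul_bar_self_eq_iff {v π : Wreath r n} : v * v.bar = π ↔
    v.1 * v.1 = π.1 ∧ ∀ x, v.2 (v.1 x) = v.2 x + π.2 x := by
  refine Prod.ext_iff.trans (and_congr .rfl (funext_iff.trans (forall_congr' fun x => ?_)))
  change v.2 (v.1 x) + -v.2 x = π.2 x ↔ _
  rw [← sub_eq_add_neg, sub_eq_iff_eq_add']

theorem Wreath.mul_bar_self_eq_one_iff {w : Wreath r n} : w * w.bar = 1 ↔
    w.1 * w.1 = 1 ∧ ∀ x, w.2 (w.1 x) = w.2 x := by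
  refine mul_bar_self_eq_iff.trans (and_congr_right' (forall_congr' fun x => ?_))
  rw [show (1 : Wreath r n).2 x = 0 from rfl, add_zero]

theorem Wreath.mul_mul_tr_eq_self_iff {π w : Wreath r n} : π * w * π.tr = w ↔
    w.1 * π.1 = π.1 * w.1 ∧ ∀ x, w.2 (π.1 x) = w.2 x + π.2 x + π.2 (w.1 x) := by
  rw [tr, mul_inv_eq_iff_eq_mul, eq_comm]
  refine Prod.ext_iff.trans (and_congr .rfl (funext_iff.trans (forall_congr' fun x => ?_)))
  change w.2 (π.1 x) + -π.2 x = π.2 (w.1 x) + w.2 x ↔ _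
  rw [← sub_eq_add_neg, sub_eq_iff_eq_add, add_assoc, add_comm, add_right_comm]

theorem Wreath.isConj_inv_bar (g : Wreath r n) : IsConj g⁻¹ g.bar := by
  obtain ⟨s, hs, hcycle⟩ := exists_semiconj_inv_sameCycle g.1
  obtain ⟨y, hy⟩ := isCoboundary_comp_inv_comp_sub_of_semiconj_inv hs hcycle g.2
  let h : Wreath r n := (s, y)
  suffices hconj : h * g = g.bar⁻¹ * h by
    refine isConj_iff.2 ⟨h, ?_⟩
    rw [← conj_inv, inv_eq_iff_eq_inv, mul_inv_eq_iff_eq_mul, hconj]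
  refine Prod.ext (Equiv.ext hs) (funext fun i => ?_)
  change y (g.1 i) + g.2 i = - -g.2 (g.1⁻¹ (s i)) + y i
  rw [hy, neg_neg, add_assoc, Pi.sub_apply, sub_add_cancel, add_comm]
  rfl

theorem AbsInv.involutive (w : AbsInv r n) : Function.Involutive w.1.1 :=
  DFunLike.congr_fun (Wreath.mul_bar_self_eq_one_iff.1 w.2).1

theorem signO_eq_pairSign (π : Wreath r n) (w : AbsInv r n) :
    signO π w.1 = pairSign π.1 w.1.1 :=
  (pairSign_eq_neg_one_pow π.1 w.involutive).symm

theorem signO_one (w : Wreath r n) : signO 1 w = 1 := by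
  have hinv : invPairs (1 : Equiv.Perm (Fin n)) = ∅ :=
    filter_eq_empty_iff.2 fun _ _ hp => lt_asymm hp.1 hp.2
  rw [signO, Wreath.one_def, hinv, empty_inter, card_empty, pow_zero]

theorem signO_mul (a b : Wreath r n) (w : AbsInv r n) :
    signO (a * b) w.1 = signO a (conjAbs b w).1 * signO b w.1 := by
  simp only [signO_eq_pairSign]
  exact pairSign_mul a.1 b.1 w.1.1

theorem conjAbs_one (w : AbsInv r n) : conjAbs 1 w = w :=
  Subtype.ext <| Wreath.mul_mul_tr_eq_self_iff.2 <| by simp [Wreath.one_def]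

theorem conjAbs_mul (a b : Wreath r n) (w : AbsInv r n) :
    conjAbs (a * b) w = conjAbs a (conjAbs b w) := by
  refine Subtype.ext ?_
  simp only [conjAbs, Wreath.tr, Wreath.bar_mul, mul_inv_rev, mul_assoc]

theorem sum_filter_fst_prod {α β M : Type*} [Fintype α] [Fintype β] [AddCommMonoid M]
    (p : α → Prop) (q : α → β → Prop) [DecidablePred p] [∀ a, DecidablePred (q a)] (f : α → M) :
    ∑ x : α × β with p x.1 ∧ q x.1 x.2, f x.1 = ∑ a with p a, #{b | q a b} • f a := by
  simp only [← sum_const, sum_filter, Fintype.sum_prod_type, ite_and]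
  refine sum_congr rfl fun a _ => ?_
  split_ifs <;> simp

theorem sum_signO_conjAbs_eq_self [NeZero r] (hr : Odd r) (π : Wreath r n) :
    ∑ w : AbsInv r n with conjAbs π w = w, signO π w.1 = #{v : Wreath r n | v * v.bar = π} := by
  have : Invertible (2 : ZMod r) :=
    ((ZMod.isUnit_iff_coprime 2 r).2 (Nat.coprime_two_left.2 hr)).invertible
  calc ∑ w : AbsInv r n with conjAbs π w = w, signO π w.1
      = ∑ w : Wreath r n with (w.1 * w.1 = 1 ∧ w.1 * π.1 = π.1 * w.1) ∧
          (∀ x, w.2 (w.1 x) = w.2 x) ∧ ∀ x, w.2 (π.1 x) = w.2 x + π.2 x + π.2 (w.1 x),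
            pairSign π.1 w.1 := by
        refine sum_nbij Subtype.val (fun w hw => ?_) Subtype.val_injective.injOn (fun w hw => ?_)
          fun w _ => signO_eq_pairSign π w
        · have hinv := Wreath.mul_bar_self_eq_one_iff.1 w.2
          have hfix := Wreath.mul_mul_tr_eq_self_iff.1 (congrArg Subtype.val (mem_filter.1 hw).2)
          exact mem_filter.2 ⟨mem_univ _, ⟨hinv.1, hfix.1⟩, hinv.2, hfix.2⟩
        · obtain ⟨⟨hinv, hcomm⟩, hcinv, hcomm'⟩ := (mem_filter.1 (mem_coe.1 hw)).2
          refine ⟨⟨w, Wreath.mul_bar_self_eq_one_iff.2 ⟨hinv, hcinv⟩⟩, ?_, rfl⟩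
          refine mem_coe.2 (mem_filter.2 ⟨mem_univ _, Subtype.ext ?_⟩)
          exact Wreath.mul_mul_tr_eq_self_iff.2 ⟨hcomm, hcomm'⟩
    _ = ∑ u with u * u = 1 ∧ u * π.1 = π.1 * u, pairSign π.1 u *
          #{c : Fin n → ZMod r | (∀ x, c (u x) = c x) ∧
            ∀ x, c (π.1 x) = c x + π.2 x + π.2 (u x)} := by
        refine (sum_filter_fst_prod (fun u => u * u = 1 ∧ u * π.1 = π.1 * u)
          (fun u (c : Fin n → ZMod r) =>
            (∀ x, c (u x) = c x) ∧ ∀ x, c (π.1 x) = c x + π.2 x + π.2 (u x))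
          (pairSign π.1)).trans (sum_congr rfl fun u _ => ?_)
        rw [nsmul_eq_mul, mul_comm]
    _ = ∑ τ with τ * τ = π.1, (#{c : Fin n → ZMod r | ∀ x, c (τ x) = c x + π.2 x} : ℤ) :=
        by convert sum_pairSign_mul_card_colourings π.1 π.2
    _ = #{v : Wreath r n | v * v.bar = π} := by
        simp only [Wreath.mul_bar_self_eq_iff]
        have := sum_filter_fst_prod (fun τ => τ * τ = π.1)
          (fun τ (c : Fin n → ZMod r) => ∀ x, c (τ x) = c x + π.2 x) (fun _ => (1 : ℤ))
        simp only [sum_const, nsmul_eq_mul, mul_one] at this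
        exact this.symm

theorem basisFun_constr_single {k ι M : Type*} [CommSemiring k] [AddCommMonoid M] [Module k M]
    [Finite ι] [DecidableEq ι] (f : ι → M) (i : ι) :
    (Pi.basisFun k ι).constr k f (Pi.single i 1) = f i := by
  rw [← Pi.basisFun_apply, Module.Basis.constr_basis]

/-- The Gelfand model `C_w ↦ sign_o(π, w) C_{π w πᵗ}`, with `Pi.single w 1` in the role of `C_w`. -/
noncomputable def gelfandModel (r n : ℕ) [NeZero r] :
    Representation ℂ (Wreath r n) (AbsInv r n → ℂ) where
  toFun π := (Pi.basisFun ℂ (AbsInv r n)).constr ℂ fun w =>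
    (signO π w.1 : ℂ) • Pi.single (conjAbs π w) (1 : ℂ)
  map_one' := (Pi.basisFun ℂ (AbsInv r n)).ext fun w => by
    simp [conjAbs_one, signO_one]
  map_mul' a b := (Pi.basisFun ℂ (AbsInv r n)).ext fun w => by
    simp only [Module.End.mul_apply, Pi.basisFun_apply, basisFun_constr_single, map_smul,
      conjAbs_mul, signO_mul, smul_smul, Int.cast_mul, mul_comm]

theorem gelfandModel_single [NeZero r] (π : Wreath r n) (w : AbsInv r n) :
    gelfandModel r n π (Pi.single w 1) =
      (signO π w.1 : ℂ) • (Pi.single (conjAbs π w) 1 : AbsInv r n → ℂ) :=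
  basisFun_constr_single _ w

theorem trace_gelfandModel [NeZero r] (π : Wreath r n) :
    LinearMap.trace ℂ (AbsInv r n → ℂ) (gelfandModel r n π) =
      ∑ w : AbsInv r n with conjAbs π w = w, (signO π w.1 : ℂ) := by
  rw [LinearMap.trace_eq_matrix_trace ℂ (Pi.basisFun ℂ (AbsInv r n)), Matrix.trace, sum_filter]
  refine sum_congr rfl fun w _ => ?_
  rw [Matrix.diag_apply, LinearMap.toMatrix_apply, Pi.basisFun_apply, gelfandModel_single,
    Pi.basisFun_repr, Pi.smul_apply, Pi.single_apply, smul_eq_mul, mul_ite, mul_one, mul_zero]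
  simp only [eq_comm]

theorem character_gelfandModel [NeZero r] (hr : Odd r) (π : Wreath r n) :
    (gelfandModel r n).character π = #{v : Wreath r n | v * v.bar = π} := by
  rw [Representation.character, trace_gelfandModel]
  exact_mod_cast sum_signO_conjAbs_eq_self hr π

end GelfandModel

/-- **Gelfand model for `ℤ_r ≀ S_n`, `r` odd** (Theorem `t.model`, odd case):
the map `ρ` with `ρ(π) C_w = sign_o(π,w) · C_{π w πᵗ}` on the vector space `V_{r,n}`
with basis `{C_w : w ∈ I_{r,n}}` is a group homomorphism (a linear representation),
and the trace of `ρ(π)` equals `∑_{χ ∈ Irr(G(r,n))} χ(π)` for every `π`; i.e. `ρ` is a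
Gelfand model, equivalent to the multiplicity-free sum of all irreducibles. -/
theorem gelfand_model_odd
    (r n : ℕ) [NeZero r] (hn : 0 < n) (hr : Odd r)
    {ι : Type} [Fintype ι] (V : ι → FDRep ℂ (Wreath r n))
    (hV : IsCompleteIrrFamily V) :
    ∃ ρ : Representation ℂ (Wreath r n) (AbsInv r n → ℂ),
      (∀ (π : Wreath r n) (w : AbsInv r n),
        ρ π (Pi.single w (1 : ℂ)) = (signO π w.1 : ℂ) • (Pi.single (conjAbs π w) (1 : ℂ) : AbsInv r n → ℂ)) ∧
      ∀ π : Wreath r n,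
        LinearMap.trace ℂ (AbsInv r n → ℂ) (ρ π) = ∑ i, (V i).character π := by
  refine ⟨gelfandModel r n, gelfandModel_single, fun π => ?_⟩
  exact character_eq_sum_of_character_eq_card_twisted_sqrt hV
    (ε := Wreath.barAut.toMonoidHom) Wreath.bar_bar Wreath.isConj_inv_bar
    (character_gelfandModel hr) π
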